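/- arXiv:1801.05919 — 2 statements merged into one kernel-verified Lean document; each statement's English description precedes it below -/
import Mathlib

section
/- Corollary (binary field size): Let B, T be integers with 1 ≤ B ≤ T, write T = aB + δ with a ≥ 0 and 1 ≤ δ ≤ B, and assume δ ≥ B − 1. Then there exists a binary linear code C ⊆ F_2^n of length n = B + T and dimension k = T that conforms to C(1,B,W) with delay T (i.e., the case N = 1 of the conforming condition). -/
/-!
Every burst and every single erasure lies in a window of `B` coordinates, so it suffices to
recover, for each window of length exactly `B` and each `i` in it, the coordinate `i` from the
coordinates outside the window up to time `i + T`. By `recoverable_of_dual` this amounts to a dual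
codeword equal to `1` at `i` and to `0` on the rest of the window and after time `i + T`.

Write `T = (m + 1) * B + d` with `d = 0` (when `δ = B`) or `d + 1 = B` (when `δ = B - 1`). The code
is the kernel of the `B × (B + T)` matrix `[I | ⋯ | I | P | I]`, with `m + 1` identity blocks before
`P`, where `P` has `d` columns and its `t`-th column is `e_t + e_{t+1}`. The last identity block
makes the matrix surjective, so the kernel has dimension `T`. The dual words used are the sums of
the rows `p, …, q` (`rowSum`): a telescoping sum of consecutive rows meets `P` only in the columns
`p - 1` and `q`. Hence a window inside identity blocks needs a single row, a window running into `P`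
from the left needs a sum of the rows `0, …, q`, and one leaving `P` to the right a sum of the rows
`p, …, B - 1`; this is `exists_rowSum`. Only coordinates `i < B` have a deadline before the end of
the code, and for these the rows involved have index at most `i`, hence no support after `i + T`.
-/

open Finset

/-- Coordinate `i` of the linear code `C` is recoverable from the coordinate set `I`:
there exist scalars `λ_j` with `c_i = ∑_{j ∈ I} λ_j c_j` for every codeword `c ∈ C`. -/
def Recoverable {F : Type*} [Field F] {n : ℕ} (C : Submodule F (Fin n → F))
    (i : Fin n) (I : Finset (Fin n)) : Prop :=
  ∃ lam : Fin n → F, ∀ c ∈ C, c i = ∑ j ∈ I, lam j * c j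

/-- The linear code `C` conforms to the channel `C(N,B,W)` with delay constraint `T`:
with `Δ_i = min (i+T) (n-1)`, every coordinate `i` is recoverable from `{0,…,Δ_i} \ 𝒩`
for every `𝒩` with `|𝒩| ≤ N`, and from `{0,…,Δ_i} \ [u,v]` for every interval `[u,v]`
with `v - u + 1 ≤ B`. -/
def Conforms {F : Type*} [Field F] {n : ℕ} (C : Submodule F (Fin n → F))
    (N B T : ℕ) : Prop :=
  ∀ i : Fin n,
    (∀ 𝒩 : Finset (Fin n), 𝒩.card ≤ N →
      Recoverable C i
        ((Finset.univ.filter fun j : Fin n => j.val ≤ min (i.val + T) (n - 1)) \ 𝒩)) ∧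
    (∀ u v : ℕ, u ≤ v → v ≤ n - 1 → v - u + 1 ≤ B →
      Recoverable C i
        (Finset.univ.filter fun j : Fin n =>
          j.val ≤ min (i.val + T) (n - 1) ∧ ¬(u ≤ j.val ∧ j.val ≤ v)))

/-- The entry in row `r` and column `j` of the parity-check matrix `[I | ⋯ | I | P | I]`, where
`A` is the position at which `P` starts and `T` the position at which the last identity block
starts. -/
def checkEntry (B A T r j : ℕ) : ZMod 2 :=
  if j < A then (if r = j % B then 1 else 0)
  else if j < T then (if r = j - A then 1 else 0) + (if r = j - A + 1 then 1 else 0)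
  else (if r = j - T then 1 else 0)

/-- The entry in column `j` of the sum of the rows `p, …, q` of the parity-check matrix. -/
def rowSum (B A T p q j : ℕ) : ZMod 2 :=
  if j < A then (if p ≤ j % B ∧ j % B ≤ q then 1 else 0)
  else if j < T then
    (if p ≤ j - A ∧ j - A ≤ q then 1 else 0) + (if p ≤ j - A + 1 ∧ j - A + 1 ≤ q then 1 else 0)
  else (if p ≤ j - T ∧ j - T ≤ q then 1 else 0)

lemma rowSum_eq_sum (B A T p q j : ℕ) :
    rowSum B A T p q j = ∑ r ∈ Finset.Icc p q, checkEntry B A T r j := by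
  unfold rowSum checkEntry
  split_ifs <;> simp_all [Finset.sum_add_distrib, Finset.sum_ite_eq']; grind

/-- The parity-check matrix as a linear map. -/
def checkMap (B A T : ℕ) : (Fin (B + T) → ZMod 2) →ₗ[ZMod 2] (Fin B → ZMod 2) :=
  Matrix.mulVecLin (Matrix.of fun (r : Fin B) (j : Fin (B + T)) => checkEntry B A T r j)

lemma checkMap_apply (B A T : ℕ) (c : Fin (B + T) → ZMod 2) (r : Fin B) :
    checkMap B A T c r = ∑ j : Fin (B + T), checkEntry B A T r j * c j := by
  simp [checkMap, Matrix.mulVec, dotProduct]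

/-- The last identity block makes the parity-check map surjective. -/
lemma finrank_ker_checkMap (B A T : ℕ) (hAT : A ≤ T) :
    Module.finrank (ZMod 2) (LinearMap.ker (checkMap B A T)) = T := by
  have hsurj : Function.Surjective (checkMap B A T) := by
    intro y
    refine ⟨fun j => if h : T ≤ j.val then y ⟨j.val - T, by omega⟩ else 0, ?_⟩
    funext r
    rw [checkMap_apply, Finset.sum_eq_single (⟨T + r.val, by omega⟩ : Fin (B + T))]
    · have h1 : ¬ (T + r.val < A) := by omega
      simp [checkEntry, h1]
    · intro j _ hj
      have hj' : j.val ≠ T + r.val := fun h => hj (Fin.ext h)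
      by_cases h : T ≤ j.val
      · have h1 : ¬ (j.val < A) := by omega
        have h2 : ¬ (j.val < T) := by omega
        have h3 : ¬ (r.val = j.val - T) := by omega
        simp [checkEntry, h1, h2, h3]
      · simp [h]
    · simp
  have h := LinearMap.finrank_range_add_finrank_ker (checkMap B A T)
  rw [LinearMap.range_eq_top.2 hsurj, finrank_top] at h
  simp at h
  omega

lemma rowSum_dual (B A T p q : ℕ) (hq : q < B) (c : Fin (B + T) → ZMod 2)
    (hc : c ∈ LinearMap.ker (checkMap B A T)) :
    ∑ j : Fin (B + T), rowSum B A T p q j * c j = 0 := by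
  simp_rw [rowSum_eq_sum, Finset.sum_mul]
  rw [Finset.sum_comm]
  refine Finset.sum_eq_zero fun r hr => ?_
  have hr' : r < B := by have := (Finset.mem_Icc.1 hr).2; omega
  have := congrFun (LinearMap.mem_ker.1 hc) ⟨r, hr'⟩
  rwa [checkMap_apply] at this

/-- A dual word that is `1` at `i` and vanishes outside `I ∪ {i}` recovers coordinate `i`. -/
lemma recoverable_of_dual {F : Type*} [Field F] {n : ℕ} {C : Submodule F (Fin n → F)}
    {i : Fin n} {I : Finset (Fin n)} (w : Fin n → F)
    (hw : ∀ c ∈ C, ∑ j, w j * c j = 0) (hi : w i = 1)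
    (h0 : ∀ j, j ∉ I → j ≠ i → w j = 0) : Recoverable C i I := by
  by_cases hiI : i ∈ I
  · exact ⟨fun j => if j = i then 1 else 0, fun c _ => by simp [hiI]⟩
  · refine ⟨fun j => - w j, fun c hc => ?_⟩
    have h := hw c hc
    have h2 : ∑ j ∈ insert i I, w j * c j = ∑ j, w j * c j := by
      refine Finset.sum_subset (Finset.subset_univ _) fun j _ hj => ?_
      rw [Finset.mem_insert, not_or] at hj
      rw [h0 j hj.2 hj.1, zero_mul]
    rw [h, Finset.sum_insert hiI, hi, one_mul] at h2
    simp only [neg_mul, Finset.sum_neg_distrib]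
    exact eq_neg_of_add_eq_zero_left h2

lemma Recoverable.mono {F : Type*} [Field F] {n : ℕ} {C : Submodule F (Fin n → F)}
    {i : Fin n} {I J : Finset (Fin n)} (h : Recoverable C i I) (hIJ : I ⊆ J) :
    Recoverable C i J := by
  obtain ⟨lam, hl⟩ := h
  refine ⟨fun j => if j ∈ I then lam j else 0, fun c hc => ?_⟩
  rw [hl c hc, ← Finset.sum_subset hIJ (fun j _ hj => by simp [hj])]
  exact Finset.sum_congr rfl fun j hj => by simp [hj]

lemma mod_eq_sub_of_block {B m j : ℕ} (h1 : m * B ≤ j) (h2 : j < m * B + B) :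
    j % B = j - m * B := by
  obtain ⟨t, rfl⟩ := Nat.exists_eq_add_of_le h1
  rw [Nat.mul_add_mod_self_right, Nat.mod_eq_of_lt (by omega)]
  omega

lemma mod_ne_of_window {B i j : ℕ} (h1 : i < j + B) (h2 : j < i + B) (hne : j ≠ i) :
    j % B ≠ i % B := by
  intro h
  rcases lt_or_gt_of_ne hne with hlt | hlt
  · have := (Nat.modEq_iff_dvd' hlt.le).1 h
    have := Nat.le_of_dvd (by omega) this
    omega
  · have := (Nat.modEq_iff_dvd' hlt.le).1 h.symm
    have := Nat.le_of_dvd (by omega) this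
    omega

/-- For every window `[u, u + B - 1]` and every `i` in it, some sum of consecutive rows is `1` at
`i`, and vanishes on the rest of the window and after time `i + T`. -/
lemma exists_rowSum {B T m d : ℕ} (hB : 1 ≤ B) (hT : T = (m + 1) * B + d)
    (hd : d = 0 ∨ d + 1 = B) {u i : ℕ} (hu : u ≤ T) (hui : u ≤ i) (hiu : i < u + B) :
    ∃ p q, q < B ∧ rowSum B ((m + 1) * B) T p q i = 1 ∧
      ∀ j, j < B + T → j ≠ i → (i + T < j ∨ (u ≤ j ∧ j < u + B)) →
        rowSum B ((m + 1) * B) T p q j = 0 := by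
  have hA : (m + 1) * B = m * B + B := by ring
  rw [hA] at hT ⊢
  have hblock : ∀ j, m * B ≤ j → j < m * B + B → j % B = j - m * B :=
    fun j => mod_eq_sub_of_block
  have hne : ∀ j, u ≤ j → j < u + B → j ≠ i → j % B ≠ i % B :=
    fun j h1 h2 h3 => mod_ne_of_window (by omega) (by omega) h3
  have hiB : i < B → i % B = i := Nat.mod_eq_of_lt
  have hlt : ∀ j, j % B < B := fun j => Nat.mod_lt _ hB
  generalize m * B = M at *
  by_cases h1 : i < M + B
  · have hi := hlt i
    have hbi := hblock i
    by_cases h2 : u ≤ M ∨ u ≠ i ∨ d = 0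
    · -- The single row through `i` avoids the part of the window outside the first blocks.
      refine ⟨i % B, i % B, hi, by simp [rowSum, h1], fun j hj hji hwin => ?_⟩
      have := hne j
      have := hblock j
      unfold rowSum
      split_ifs <;> first | rfl | (exfalso; omega)
    · -- The window starts at `i` in the last block before `P` and runs into `P`.
      refine ⟨0, i % B, hi, by simp [rowSum, h1], fun j hj hji hwin => ?_⟩
      have := hblock j
      unfold rowSum
      split_ifs <;> first | rfl | (exfalso; omega)
  · by_cases h2 : i < T
    · by_cases h3 : u < M + B
      · refine ⟨0, i - (M + B), by omega, ?_, fun j hj hji hwin => ?_⟩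
        · simp [rowSum, h1, h2]
        · have := hblock j
          unfold rowSum
          split_ifs <;> first | rfl | (exfalso; omega)
      · refine ⟨i - (M + B) + 1, B - 1, by omega, ?_, fun j hj hji hwin => ?_⟩
        · unfold rowSum
          split_ifs <;> first | rfl | (exfalso; omega)
        · unfold rowSum
          split_ifs <;> first | rfl | (exfalso; omega)
    · by_cases h3 : d ≠ 0 ∧ i - T = u - (M + B)
      · refine ⟨i - T, B - 1, by omega, ?_, fun j hj hji hwin => ?_⟩
        · unfold rowSum
          split_ifs <;> first | rfl | (exfalso; omega)
        · unfold rowSum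
          split_ifs <;> first | rfl | (exfalso; omega)
      · refine ⟨i - T, i - T, by omega, ?_, fun j hj hji hwin => ?_⟩
        · simp [rowSum, h1, h2]
        · have := hblock j
          have := hne j
          have := hblock i
          unfold rowSum
          split_ifs <;> first | rfl | (exfalso; omega)

lemma recoverable_window {B T m d : ℕ} (hB : 1 ≤ B) (hT : T = (m + 1) * B + d)
    (hd : d = 0 ∨ d + 1 = B) (i : Fin (B + T)) (u v : ℕ) (hvB : v - u + 1 ≤ B)
    (huv : u ≤ v) (hv : v ≤ B + T - 1) :
    Recoverable (LinearMap.ker (checkMap B ((m + 1) * B) T)) i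
      (Finset.univ.filter fun j : Fin (B + T) =>
          j.val ≤ min (i.val + T) (B + T - 1) ∧ ¬(u ≤ j.val ∧ j.val ≤ v)) := by
  by_cases hi : u ≤ i.val ∧ i.val ≤ v
  · -- Near the end of the code, the window of length `B` is shifted left to stay inside it.
    obtain ⟨p, q, hq, h1, h0⟩ := exists_rowSum hB hT hd (u := min u T) (i := i.val)
      (by omega) (by omega) (by omega)
    refine recoverable_of_dual (fun j => rowSum B ((m + 1) * B) T p q j)
      (rowSum_dual B _ T p q hq) h1 fun j hj hji => ?_
    refine h0 j j.2 (fun h => hji (Fin.ext h)) ?_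
    simp only [Finset.mem_filter, Finset.mem_univ, true_and] at hj
    omega
  · refine ⟨fun j => if j = i then 1 else 0, fun c _ => ?_⟩
    have : i.val ≤ min (i.val + T) (B + T - 1) := by omega
    simp only [ite_mul, one_mul, zero_mul, Finset.sum_ite_eq']
    rw [if_pos]
    simp only [Finset.mem_filter, Finset.mem_univ, true_and]
    exact ⟨this, hi⟩

lemma conforms_ker_checkMap {B T m d : ℕ} (hB : 1 ≤ B) (hT : T = (m + 1) * B + d)
    (hd : d = 0 ∨ d + 1 = B) :
    Conforms (LinearMap.ker (checkMap B ((m + 1) * B) T)) 1 B T := by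
  intro i
  refine ⟨fun 𝒩 h𝒩 => ?_, fun u v huv hv hvB => recoverable_window hB hT hd i u v hvB huv hv⟩
  -- A single erasure is a burst of length one.
  obtain ⟨x, hx⟩ : ∃ x : Fin (B + T), 𝒩 ⊆ {x} := by
    have : Nonempty (Fin (B + T)) := ⟨i⟩
    exact Finset.card_le_one_iff_subset_singleton.1 h𝒩
  refine (recoverable_window hB hT hd i x x (by omega) le_rfl (by omega)).mono fun j hj => ?_
  simp only [Finset.mem_filter, Finset.mem_univ, true_and, Finset.mem_sdiff] at hj ⊢
  refine ⟨hj.1, fun hjN => hj.2 ?_⟩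
  rw [Finset.mem_singleton.1 (hx hjN)]
  exact ⟨le_rfl, le_rfl⟩

/-!
Corollary (binary field size): for `1 ≤ B ≤ T`, `T = aB + δ` with `1 ≤ δ ≤ B` and
`δ ≥ B - 1`, there exists a binary linear code of length `n = B + T` and dimension
`k = T` conforming to `C(1,B,W)` with delay `T`.
-/

theorem constructionA_binary_field
    (B T a δ : ℕ) (hB : 1 ≤ B) (hBT : B ≤ T)
    (hδ1 : 1 ≤ δ) (hδB : δ ≤ B) (hT : T = a * B + δ) (hcase : B - 1 ≤ δ) :
    ∃ C : Submodule (ZMod 2) (Fin (B + T) → ZMod 2),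
      Module.finrank (ZMod 2) C = T ∧ Conforms C 1 B T := by
  obtain ⟨m, d, hT', hd⟩ : ∃ m d, T = (m + 1) * B + d ∧ (d = 0 ∨ d + 1 = B) := by
    by_cases h : δ = B
    · exact ⟨a, 0, by rw [hT, h]; ring, Or.inl rfl⟩
    · -- Here `δ < B ≤ T`, so `a` is positive.
      rcases a with _ | m
      · omega
      · exact ⟨m, δ, hT, Or.inr (by omega)⟩
  exact ⟨_, finrank_ker_checkMap B ((m + 1) * B) T (by omega), conforms_ker_checkMap hB hT' hd⟩
end

section
/- Construction-B recovery from N arbitrary erasures: Let C be a Construction-B code with parameters N, B, T, n = B+T−N+1 and k = T−N+1, and let Δ_i = min(i+T, n−1). Then for every i ∈ {0,…,n−1} and every set 𝒩 ⊆ {0,…,n−1} with |𝒩| ≤ N, the i-th coordinate of C is recoverable from {0,…,Δ_i} \ 𝒩; that is, C corrects any N arbitrary erasures with decoding delay at most T. -/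
/-!
A codeword is `c_j = f(θ_j)` (with `c_{n-1} = f(θ_T)`) for a linearized polynomial
`f = ∑_{r<k} m_r X^{q^r}`, `k = T - N + 1`, which induces a `K`-linear map `L → L`.

Since the code is an `L`-linear space, coordinate `i` is recoverable from `I` as soon as every
codeword vanishing on `I` vanishes at `i` (`recoverable_of_vanishing`). So let `c` vanish on
`I = {0,…,Δ_i} \ E`; if `i ∉ E` there is nothing to show, so let `i ∈ E`. Rank–nullity
(`card_le_finrank_ker_add`) bounds `ker f` from below:

* If `i ≥ B - N`, then `I` reaches `n - 1`, and `f` maps the span of `θ_0, …, θ_T` into the span of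
  `{c_j : j ∈ E}`, so `dim ker f ≥ (T + 1) - N = k`.
* If `i < B - N`, then the parity check for `c_{T+i}` contains `c_i` with coefficient `1` and
  expresses it through other coordinates of index at most `T + i`. Hence `f` maps the span of
  `θ_0, …, θ_{T-1}` into the span of `{c_j : j ∈ E \ {i}}`, so `dim ker f ≥ T - (N - 1) = k`.

Either way `f` has at least `q^k` roots but degree at most `q^(k-1)`, so `f = 0`
(`coeff_eq_zero_of_le_finrank_ker`).
-/

open Finset

/-- For a set `C` of (ℕ-indexed) codewords over `L`, coordinate `i` is recoverable from the
finite coordinate set `I`: there exist scalars `λ_j` with `c_i = ∑_{j ∈ I} λ_j c_j` for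
every `c ∈ C`. -/
def RecoverableFrom {L : Type*} [Field L] (C : Set (ℕ → L)) (i : ℕ) (I : Finset ℕ) : Prop :=
  ∃ lam : ℕ → L, ∀ c ∈ C, c i = ∑ j ∈ I, lam j * c j

/-- The Construction-B code with parameters `N, B, T` where `T = aB + δ`, `1 ≤ δ ≤ B`,
`δ' = min δ (B - N)`, over `L ⊇ K = F_q` with `q = p^e`. The message `m ∈ L^k`,
`k = T - N + 1`, is encoded via the linearized polynomial `f(x) = ∑ m_i x^{q^i}` evaluated
at points `θ_0, …, θ_T` (linearly independent over `K`):
`c_j = f(θ_j)` for `0 ≤ j ≤ T-1`; `c_{n-1} = f(θ_T)` with `n = B + T - N + 1`;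
`c_{T+j} = c_j + c_{j+B} + ⋯ + c_{j+aB}` for `0 ≤ j ≤ δ'-1`; and
`c_{T+j} = c_j + c_{B+j} + ⋯ + c_{(a-1)B+j} + ∑_{ℓ<δ} γ_{j,ℓ} c_{aB+ℓ}` for
`δ' ≤ j ≤ B-N-1`, where `γ_{j,ℓ} = (x_j - y_ℓ)⁻¹` is a Cauchy matrix over `K`. -/
def ConstructionB {L : Type*} [Field L] (N B T a δ q : ℕ) (θ : ℕ → L)
    (x y : ℕ → L) : Set (ℕ → L) :=
  { c : ℕ → L | ∃ m : Fin (T - N + 1) → L,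
      (∀ j < T, c j = ∑ i, m i * θ j ^ q ^ (i : ℕ)) ∧
      (c (B + T - N) = ∑ i, m i * θ T ^ q ^ (i : ℕ)) ∧
      (∀ j < min δ (B - N),
        c (T + j) = ∑ ℓ ∈ Finset.range (a + 1), c (j + ℓ * B)) ∧
      (∀ j, min δ (B - N) ≤ j → j < B - N →
        c (T + j) = (∑ ℓ ∈ Finset.range a, c (j + ℓ * B)) +
          ∑ ℓ ∈ Finset.range δ, (x j - y ℓ)⁻¹ * c (a * B + ℓ)) }

/-! ### Kernels of linearized polynomials -/

/-- A linearized polynomial with coefficients `m` induces a `K`-linear map, as `s ^ q = s` on `K`. -/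
lemma exists_linearMap_of_coeffs {L : Type*} [Field L] [Fintype L] (p e : ℕ) (hp : p.Prime)
    [CharP L p] (K : Subfield L) (hcardK : Nat.card K = p ^ e) (k : ℕ) (m : Fin k → L) :
    ∃ F : L →ₗ[K] L, ∀ z, F z = ∑ r, m r * z ^ (p ^ e) ^ (r : ℕ) := by
  have : Fact p.Prime := ⟨hp⟩
  have : Fintype K := Fintype.ofFinite K
  refine ⟨{ toFun := fun z => ∑ r, m r * z ^ (p ^ e) ^ (r : ℕ), map_add' := ?_,
            map_smul' := ?_ }, fun z => rfl⟩
  · intro u v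
    simp only [← pow_mul, add_pow_char_pow, mul_add, Finset.sum_add_distrib]
  · intro s u
    simp only [RingHom.id_apply, Finset.smul_sum]
    refine Finset.sum_congr rfl fun r _ => ?_
    have hs : (s : L) ^ (p ^ e) ^ (r : ℕ) = s := by
      have := FiniteField.pow_card_pow (K := K) (r : ℕ) s
      rw [← Nat.card_eq_fintype_card, hcardK] at this
      exact_mod_cast congrArg Subtype.val this
    rw [Subfield.smul_def, Subfield.smul_def, smul_eq_mul, smul_eq_mul, mul_pow, hs]
    ring

open Polynomial in
/-- A nonzero `q`-polynomial of `q`-degree less than `k` has fewer than `q ^ k` roots, so its kernel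
has `K`-dimension less than `k`. -/
lemma coeff_eq_zero_of_le_finrank_ker {L : Type*} [Field L] [Fintype L] (K : Subfield L)
    (q k : ℕ) (hq : 2 ≤ q) (hcardK : Nat.card K = q) (m : Fin k → L) (F : L →ₗ[K] L)
    (hF : ∀ z, F z = ∑ r, m r * z ^ q ^ (r : ℕ))
    (hk : k ≤ Module.finrank K (LinearMap.ker F)) : m = 0 := by
  classical
  by_contra hm
  obtain ⟨r₀, hr₀⟩ : ∃ r, m r ≠ 0 := by
    by_contra! h
    exact hm (funext h)
  set P : L[X] := ∑ r, C (m r) * X ^ q ^ (r : ℕ) with hP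
  have hP0 : P ≠ 0 := by
    intro h
    apply hr₀
    have h1 : P.coeff (q ^ (r₀ : ℕ)) = m r₀ := by
      rw [hP, finsetSum_coeff, Finset.sum_eq_single r₀]
      · simp
      · intro b _ hb
        rw [coeff_C_mul, coeff_X_pow, if_neg, mul_zero]
        intro h
        exact hb (Fin.ext (Nat.pow_right_injective hq h).symm)
      · simp
    rw [← h1, h, coeff_zero]
  have hdeg : P.natDegree ≤ q ^ (k - 1) := by
    refine natDegree_sum_le_of_forall_le _ _ fun r _ => ?_
    refine (natDegree_C_mul_X_pow_le _ _).trans ?_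
    exact Nat.pow_le_pow_right (by omega) (by have := r.2; omega)
  have hroots : Nat.card (LinearMap.ker F) ≤ P.natDegree := by
    have hsub : (LinearMap.ker F : Set L) ⊆ (P.roots.toFinset : Set L) := by
      intro z hz
      have hz : F z = 0 := hz
      rw [hF] at hz
      rw [Finset.mem_coe, Multiset.mem_toFinset, mem_roots hP0, IsRoot.def, hP]
      simpa [eval_finsetSum] using hz
    calc Nat.card (LinearMap.ker F) = (LinearMap.ker F : Set L).ncard := rfl
      _ ≤ (P.roots.toFinset : Set L).ncard := Set.ncard_le_ncard hsub (Finset.finite_toSet _)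
      _ = P.roots.toFinset.card := Set.ncard_coe_finset _
      _ ≤ _ := (Multiset.toFinset_card_le _).trans (card_roots' P)
  rw [Module.natCard_eq_pow_finrank (K := K), hcardK] at hroots
  have h1 : q ^ k ≤ q ^ (k - 1) :=
    (Nat.pow_le_pow_right (by omega) hk).trans (hroots.trans hdeg)
  have h2 := (Nat.pow_le_pow_iff_right (a := q) (by omega)).1 h1
  have := r₀.2
  omega

/-- Rank–nullity on the span of `t` independent vectors whose images lie in the span of the family
`c` over `D`. -/
lemma card_le_finrank_ker_add {K L : Type*} [Field K] [AddCommGroup L] [Module K L]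
    [FiniteDimensional K L] (t : ℕ) (θ : Fin t → L) (hθ : LinearIndependent K θ)
    (F : L →ₗ[K] L) (c : ℕ → L) (D : Finset ℕ)
    (h : ∀ j, F (θ j) ∈ Submodule.span K (c '' (D : Set ℕ))) :
    t ≤ Module.finrank K (LinearMap.ker F) + D.card := by
  classical
  set G : (Fin t → K) →ₗ[K] L := F.comp (Fintype.linearCombination K θ)
  have hinj : Function.Injective (Fintype.linearCombination K θ) := hθ.fintypeLinearCombination_injective
  have h1 := LinearMap.finrank_range_add_finrank_ker G
  rw [Module.finrank_fin_fun] at h1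
  have hr : Module.finrank K (LinearMap.range G) ≤ D.card := by
    refine (Submodule.finrank_mono (t := Submodule.span K (c '' (D : Set ℕ))) ?_).trans ?_
    · rintro _ ⟨w, rfl⟩
      simp only [G, LinearMap.comp_apply, Fintype.linearCombination_apply, map_sum, map_smul]
      exact Submodule.sum_mem _ fun j _ => Submodule.smul_mem _ _ (h j)
    · have := finrank_span_finset_le_card (R := K) (D.image c)
      rw [Finset.coe_image] at this
      exact this.trans Finset.card_image_le
  have hk : Module.finrank K (LinearMap.ker G) ≤ Module.finrank K (LinearMap.ker F) := by
    refine LinearMap.finrank_le_finrank_of_injective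
      (f := (Fintype.linearCombination K θ).restrict (p := LinearMap.ker G)
        (q := LinearMap.ker F) (fun w hw => hw)) ?_
    intro a b hab
    exact Subtype.ext (hinj (congrArg Subtype.val hab))
  omega

/-! ### Linearity of the code and recoverability -/

/-- Over a linear code, recoverability of `i` from `I` is dual to the statement that a codeword
vanishing on `I` vanishes at `i`. -/
lemma recoverable_of_vanishing {L : Type*} [Field L] (C : Submodule L (ℕ → L)) (i : ℕ)
    (I : Finset ℕ) (h : ∀ c ∈ C, (∀ j ∈ I, c j = 0) → c i = 0) :
    RecoverableFrom (C : Set (ℕ → L)) i I := by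
  classical
  let ψ : ℕ → (C →ₗ[L] L) := fun j => (LinearMap.proj j).comp C.subtype
  have hmem : ψ i ∈ Submodule.span L (Set.range fun j : I => ψ j) := by
    apply mem_span_of_iInf_ker_le_ker
    intro c hc
    simp only [Submodule.mem_iInf, LinearMap.mem_ker] at hc
    exact h c.1 c.2 fun j hj => hc ⟨j, hj⟩
  obtain ⟨w, hw⟩ := (Submodule.mem_span_range_iff_exists_fun L).1 hmem
  refine ⟨fun j => if hj : j ∈ I then w ⟨j, hj⟩ else 0, fun c hc => ?_⟩
  have h1 := congrArg (fun g : C →ₗ[L] L => g ⟨c, hc⟩) hw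
  simp only [LinearMap.sum_apply, LinearMap.smul_apply, smul_eq_mul] at h1
  rw [← Finset.sum_coe_sort]
  simpa [ψ] using h1.symm

/-- The set `ConstructionB` as a subspace of `ℕ → L`. -/
def constructionBSubmodule {L : Type*} [Field L] (N B T a δ q : ℕ) (θ x y : ℕ → L) :
    Submodule L (ℕ → L) where
  carrier := ConstructionB N B T a δ q θ x y
  zero_mem' := ⟨0, by simp⟩
  add_mem' := by
    rintro c d ⟨m, h1, h2, h3, h4⟩ ⟨m', h1', h2', h3', h4'⟩
    refine ⟨m + m', fun j hj => ?_, ?_, fun j hj => ?_, fun j hj hj' => ?_⟩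
    · simp [h1 j hj, h1' j hj, add_mul, Finset.sum_add_distrib]
    · simp [h2, h2', add_mul, Finset.sum_add_distrib]
    · simp [h3 j hj, h3' j hj, Finset.sum_add_distrib]
    · simp only [Pi.add_apply, h4 j hj hj', h4' j hj hj', Finset.sum_add_distrib, mul_add]
      ring
  smul_mem' := by
    rintro b c ⟨m, h1, h2, h3, h4⟩
    refine ⟨b • m, fun j hj => ?_, ?_, fun j hj => ?_, fun j hj hj' => ?_⟩
    · simp [h1 j hj, Finset.mul_sum, mul_assoc]
    · simp [h2, Finset.mul_sum, mul_assoc]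
    · simp [h3 j hj, Finset.mul_sum]
    · simp only [Pi.smul_apply, smul_eq_mul, h4 j hj hj', mul_add, Finset.mul_sum]
      congr 1
      exact Finset.sum_congr rfl fun _ _ => by ring

/-! ### The parity checks -/

/-- For `i < B - N`, in a codeword vanishing on `{0,…,T+i} \ E` the erased value `c i` is a
`K`-combination of the other erased values, by the parity check for `c (T + i)`. -/
lemma mem_span_of_parity {L : Type*} [Field L] (N B T a δ q : ℕ)
    (hN : 1 ≤ N) (hBT : B ≤ T) (hδB : δ ≤ B)
    (hT : T = a * B + δ) (K : Subfield L) (θ x y : ℕ → L)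
    (hxK : ∀ j, x j ∈ K) (hyK : ∀ ℓ, y ℓ ∈ K) (i : ℕ) (hi : i < B - N) (E : Finset ℕ)
    (c : ℕ → L) (hc : c ∈ ConstructionB N B T a δ q θ x y)
    (hvan : ∀ j ≤ T + i, j ∉ E → c j = 0) :
    c i ∈ Submodule.span K (c '' (E.erase i : Set ℕ)) := by
  classical
  obtain ⟨m, -, -, h3, h4⟩ := hc
  set W := Submodule.span K (c '' (E.erase i : Set ℕ))
  have hW : ∀ j ≤ T + i, j ≠ i → c j ∈ W := by
    intro j hj hji
    by_cases hjE : j ∈ E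
    · exact Submodule.subset_span ⟨j, by simp [hji, hjE], rfl⟩
    · rw [hvan j hj hjE]
      exact W.zero_mem
  have hlow : ∀ ℓ < a, i + (ℓ + 1) * B ≤ T + i := by
    intro ℓ hℓ
    have := Nat.mul_le_mul_right B (Nat.succ_le_of_lt hℓ)
    simp only [Nat.succ_eq_add_one] at this
    omega
  have hne : ∀ ℓ, i + (ℓ + 1) * B ≠ i := by
    intro ℓ
    have := Nat.mul_le_mul_right B (Nat.succ_le_succ (Nat.zero_le ℓ))
    simp only [Nat.succ_eq_add_one] at this
    omega
  have htop := hW (T + i) le_rfl (by omega)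
  rcases lt_or_ge i (min δ (B - N)) with hlt | hge
  · have h := h3 i hlt
    rw [Finset.sum_range_succ', zero_mul, add_zero] at h
    rw [← sub_eq_iff_eq_add'.2 h]
    refine W.sub_mem htop (W.sum_mem fun ℓ hℓ => ?_)
    exact hW _ (hlow ℓ (Finset.mem_range.1 hℓ)) (hne ℓ)
  · have h := h4 i hge hi
    -- `a = 0` would force `T = δ = B`, hence `min δ (B - N) = B - N`.
    obtain ⟨a', rfl⟩ : ∃ a', a = a' + 1 := by
      refine Nat.exists_eq_succ_of_ne_zero ?_
      rintro rfl
      omega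
    rw [Finset.sum_range_succ', zero_mul, add_zero] at h
    have h' : c i = c (T + i) - (∑ ℓ ∈ Finset.range a', c (i + (ℓ + 1) * B)) -
        ∑ ℓ ∈ Finset.range δ, (x i - y ℓ)⁻¹ * c ((a' + 1) * B + ℓ) := by
      rw [h]
      ring
    rw [h']
    refine W.sub_mem (W.sub_mem htop (W.sum_mem fun ℓ hℓ => ?_)) (W.sum_mem fun ℓ hℓ => ?_)
    · exact hW _ (hlow ℓ (by have := Finset.mem_range.1 hℓ; omega)) (hne ℓ)
    · have hℓ := Finset.mem_range.1 hℓ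
      have hB : B ≤ (a' + 1) * B := Nat.le_mul_of_pos_left B (by omega)
      have hmem := hW ((a' + 1) * B + ℓ) (by omega) (by omega)
      exact W.smul_mem (⟨(x i - y ℓ)⁻¹, K.inv_mem (K.sub_mem (hxK i) (hyK ℓ))⟩ : K) hmem

/-!
Construction-B recovery from `N` arbitrary erasures: with `Δ_i = min (i+T) (n-1)`,
`n = B + T - N + 1`, every coordinate `i ∈ {0,…,n-1}` is recoverable from `{0,…,Δ_i} \ 𝒩`
for every `𝒩 ⊆ {0,…,n-1}` with `|𝒩| ≤ N`; i.e. Construction B corrects any `N` arbitrary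
erasures with decoding delay at most `T`.
-/

theorem constructionB_arbitrary_erasure_recovery
    {L : Type*} [Field L] [Fintype L]
    (p e m N B T a δ : ℕ) (hp : p.Prime) (he : 1 ≤ e)
    (hN : 1 ≤ N) (hNB : N ≤ B) (hBT : B ≤ T)
    (hδ1 : 1 ≤ δ) (hδB : δ ≤ B) (hT : T = a * B + δ)
    (hq : max 2 (B - N) ≤ p ^ e) (hm : T + 1 ≤ m)
    (K : Subfield L) (hcardK : Nat.card K = p ^ e)
    (hcardL : Fintype.card L = (p ^ e) ^ m)
    -- the evaluation points `θ_0, …, θ_T` are linearly independent over `K`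
    (θ : ℕ → L)
    (hθ : ∀ coeffs : ℕ → L, (∀ j, coeffs j ∈ K) →
      (∑ j ∈ Finset.range (T + 1), coeffs j * θ j = 0) → ∀ j < T + 1, coeffs j = 0)
    -- `γ_{j,ℓ} = (x_j - y_ℓ)⁻¹` is a Cauchy matrix over `K`: the `x_j` (for
    -- `δ' ≤ j ≤ B-N-1`) and `y_ℓ` (for `0 ≤ ℓ ≤ δ-1`) are pairwise distinct elements of `K`
    (x y : ℕ → L) (hxK : ∀ j, x j ∈ K) (hyK : ∀ ℓ, y ℓ ∈ K)
    (hxinj : ∀ j ∈ Finset.Ico (min δ (B - N)) (B - N), ∀ j' ∈ Finset.Ico (min δ (B - N)) (B - N),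
      j ≠ j' → x j ≠ x j')
    (hyinj : ∀ ℓ ∈ Finset.range δ, ∀ ℓ' ∈ Finset.range δ, ℓ ≠ ℓ' → y ℓ ≠ y ℓ')
    (hxy : ∀ j ∈ Finset.Ico (min δ (B - N)) (B - N), ∀ ℓ ∈ Finset.range δ, x j ≠ y ℓ)
    (i : ℕ) (hi : i ≤ B + T - N)
    (E : Finset ℕ) (hE : E ⊆ Finset.range (B + T - N + 1)) (hEcard : E.card ≤ N) :
    RecoverableFrom (ConstructionB N B T a δ (p ^ e) θ x y) i
      (Finset.range (min (i + T) (B + T - N) + 1) \ E) := by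
  classical
  have : Fact p.Prime := ⟨hp⟩
  have : CharP L p := by
    refine charP_of_card_eq_prime_pow (f := e * m) ?_
    rw [hcardL, pow_mul]
  have hq2 : 2 ≤ p ^ e := le_of_max_le_left hq
  change RecoverableFrom (constructionBSubmodule N B T a δ (p ^ e) θ x y : Set (ℕ → L)) i _
  refine recoverable_of_vanishing _ i _ fun c hc hvan => ?_
  have hvan' : ∀ j ≤ min (i + T) (B + T - N), j ∉ E → c j = 0 := fun j hj hjE =>
    hvan j (Finset.mem_sdiff.2 ⟨Finset.mem_range.2 (by omega), hjE⟩)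
  by_cases hiE : i ∉ E
  · exact hvan' i (by omega) hiE
  rw [not_not] at hiE
  have hcC : c ∈ ConstructionB N B T a δ (p ^ e) θ x y := hc
  obtain ⟨μ, h1, h2, h3, h4⟩ := hc
  obtain ⟨F, hF⟩ := exists_linearMap_of_coeffs p e hp K hcardK _ μ
  have hlin : LinearIndependent K (fun j : Fin (T + 1) => θ j) := by
    rw [Fintype.linearIndependent_iff]
    intro g hg j
    have h := hθ (fun j => if hj : j < T + 1 then (g ⟨j, hj⟩ : L) else 0)
      (fun j => by
        split_ifs
        exacts [(g _).2, K.zero_mem])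
      (by
        refine (Finset.sum_range _).trans (Eq.trans ?_ hg)
        refine Finset.sum_congr rfl fun r _ => ?_
        rw [dif_pos r.2, Subfield.smul_def, smul_eq_mul]) j j.2
    rw [dif_pos j.2] at h
    exact Subtype.ext h
  rcases lt_or_ge i (B - N) with hiB | hiB
  · have hvan'' : ∀ j ≤ T + i, j ∉ E → c j = 0 := fun j hj => hvan' j (by omega)
    have hci := mem_span_of_parity N B T a δ (p ^ e) hN hBT hδB hT K θ x y hxK hyK i hiB E c hcC
      hvan''
    have hker := card_le_finrank_ker_add T (fun j : Fin T => θ j)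
      (hlin.comp Fin.castSucc (Fin.castSucc_injective T)) F c (E.erase i) (by
        intro j
        rw [hF, ← h1 j j.2]
        by_cases hji : (j : ℕ) = i
        · rwa [hji]
        by_cases hjE : (j : ℕ) ∈ E
        · exact Submodule.subset_span ⟨j, by simp [hji, hjE], rfl⟩
        · rw [hvan'' j (by omega) hjE]
          exact Submodule.zero_mem _)
    rw [Finset.card_erase_of_mem hiE] at hker
    have hμ : μ = 0 := coeff_eq_zero_of_le_finrank_ker K (p ^ e) _ hq2 hcardK μ F hF (by omega)
    rw [h1 i (by omega)]
    simp [hμ]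
  · have hvan'' : ∀ j ≤ B + T - N, c j ∈ Submodule.span K (c '' (E : Set ℕ)) := by
      intro j hj
      by_cases hjE : j ∈ E
      · exact Submodule.subset_span ⟨j, hjE, rfl⟩
      · rw [hvan' j (by omega) hjE]
        exact Submodule.zero_mem _
    have hker := card_le_finrank_ker_add (T + 1) _ hlin F c E (by
      intro j
      rw [hF]
      rcases Nat.lt_succ_iff_lt_or_eq.1 j.2 with hj | hj
      · rw [← h1 j hj]
        exact hvan'' j (by omega)
      · rw [hj, ← h2]
        exact hvan'' _ le_rfl)
    have hμ : μ = 0 := coeff_eq_zero_of_le_finrank_ker K (p ^ e) _ hq2 hcardK μ F hF (by omega)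
    -- All of `c` vanishes on `{0,…,n-1}`, the parity coordinates included.
    have hlow : ∀ j < T, c j = 0 := fun j hj => by simp [h1 j hj, hμ]
    have hmul : ∀ ℓ < a, ℓ * B + B ≤ a * B := fun ℓ hℓ => by
      have := Nat.mul_le_mul_right B (Nat.succ_le_of_lt hℓ)
      simpa [Nat.succ_mul] using this
    rcases lt_or_ge i T with hiT | hiT
    · exact hlow i hiT
    obtain ⟨j, rfl⟩ := Nat.exists_eq_add_of_le hiT
    rcases Nat.lt_or_ge j (B - N) with hj | hj
    · rcases lt_or_ge j (min δ (B - N)) with hjδ | hjδ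
      · rw [h3 j hjδ]
        refine Finset.sum_eq_zero fun ℓ hℓ => hlow _ ?_
        have hℓ := Finset.mem_range.1 hℓ
        have := Nat.mul_le_mul_right B (Nat.lt_succ_iff.1 hℓ)
        omega
      · rw [h4 j hjδ hj, Finset.sum_eq_zero, Finset.sum_eq_zero, add_zero]
        · intro ℓ hℓ
          have hℓ := Finset.mem_range.1 hℓ
          rw [hlow _ (by omega), mul_zero]
        · intro ℓ hℓ
          have := hmul ℓ (Finset.mem_range.1 hℓ)
          exact hlow _ (by omega)
    · rw [show T + j = B + T - N by omega, h2]
      simp [hμ]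
end
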